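/- (Interpolation formula) Let L_n(t,β) be the ℚ(β, t_1,…,t_n)-span of the monomials x_1^{i_1} x_2^{i_2} ⋯ x_n^{i_n} with 0 ≤ i_j ≤ n−j, inside the polynomial ring ℚ(β,t_1,…,t_n)[x_1,…,x_n]. Then for any F(x; t, β) ∈ L_n(t,β), F(x; t, β) = ∑_{v ∈ S_n} G^β_v(x; ⊖z) · ∂̄^β_v F(z; t, β), as an identity of rational functions in the variables x, z, t and β, where F(z;t,β) denotes F with x replaced by z and ∂̄^β_v acts on the z-variables. -/

import Mathlib

set_option synthInstance.maxHeartbeats 1000000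
set_option maxHeartbeats 1000000

noncomputable section
open scoped BigOperators

variable {F : Type*}

/-- `x ⊖ y := (x - y)/(1 + β·y)`. -/
def om [Field F] (β x y : F) : F := (x - y) / (1 + β * y)

/-- `⊖ t := -t/(1 + β·t)`. -/
def negOm [Field F] (β t : F) : F := (-t) / (1 + β * t)

/-- The R-matrix `R^{(n)}(x,y)` on `V ⊗ V`, `V = F^n`, with entries
`R_{ij,kl} = (1 + [k<l]·β(x⊖y)) δ_{il} δ_{jk} + [k>l]·(x⊖y) δ_{ik} δ_{jl}`;
the row index is the pair `(i,j)`, the column index is the pair `(k,l)`. -/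
def Rmat [Field F] (n : ℕ) (β x y : F) :
    Matrix (Fin n × Fin n) (Fin n × Fin n) F := Matrix.of fun p q =>
  (if p.1 = q.2 ∧ p.2 = q.1 then (if q.1 < q.2 then 1 + β * om β x y else 1) else 0) +
  (if p.1 = q.1 ∧ p.2 = q.2 ∧ q.2 < q.1 then om β x y else 0)

/-- The Coxeter length of a permutation: its number of inversions. -/
def permLength {N : ℕ} (w : Equiv.Perm (Fin N)) : ℕ :=
  (Finset.univ.filter fun p : Fin N × Fin N => p.1 < p.2 ∧ w p.2 < w p.1).card

/-- The longest permutation `ω_N : i ↦ N - 1 - i`. -/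
def omegaPerm (N : ℕ) : Equiv.Perm (Fin N) :=
  ⟨Fin.rev, Fin.rev, fun i => Fin.rev_rev i, fun i => Fin.rev_rev i⟩

/-- `IsGroth M β G` says that the family `G`, indexed by `S_{M+1}`, satisfies the
defining recursion of the double β-Grothendieck polynomials:
`G_{ω}(x;y) = ∏_{i+j ≤ M+1} (x_i + y_j + β x_i y_j)` (1-based indices), and
`G_{w s_i}(x;y) = ∂^β_i G_w(x;y)` whenever `ℓ(w s_i) = ℓ(w) - 1`
(the β-divided difference acting on the x-variables). -/
def IsGroth [Field F] (M : ℕ) (β : F)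
    (G : Equiv.Perm (Fin (M + 1)) → (Fin (M + 1) → F) → (Fin (M + 1) → F) → F) : Prop :=
  (∀ x y : Fin (M + 1) → F,
      G (omegaPerm (M + 1)) x y =
        ∏ p ∈ Finset.univ.filter
            (fun p : Fin (M + 1) × Fin (M + 1) => (p.1 : ℕ) + (p.2 : ℕ) + 2 ≤ M + 1),
          (x p.1 + y p.2 + β * x p.1 * y p.2)) ∧
  (∀ (w : Equiv.Perm (Fin (M + 1))) (i : Fin M) (x y : Fin (M + 1) → F),
      permLength (w * Equiv.swap i.castSucc i.succ) + 1 = permLength w →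
      x i.castSucc ≠ x i.succ →
      G (w * Equiv.swap i.castSucc i.succ) x y =
        ((1 + β * x i.succ) * G w x y -
            (1 + β * x i.castSucc) * G w (fun j => x (Equiv.swap i.castSucc i.succ j)) y) /
          (x i.castSucc - x i.succ))

/-- The operator `∂̄^β_i = ∂^β_i + β`, acting on functions of `M+1` variables
in the pair of variables with indices `i, i+1`. -/
def ddbar [Field F] {M : ℕ} (β : F) (i : Fin M) (f : (Fin (M + 1) → F) → F) :
    (Fin (M + 1) → F) → F := fun z =>
  ((1 + β * z i.succ) * f z -
      (1 + β * z i.castSucc) * f (fun j => z (Equiv.swap i.castSucc i.succ j))) /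
    (z i.castSucc - z i.succ) + β * f z

/-- `∂̄^β_{i_1} ∂̄^β_{i_2} ⋯ ∂̄^β_{i_ℓ}` for a word `L = [i_1, …, i_ℓ]`. -/
def ddbarWord [Field F] {M : ℕ} (β : F) (L : List (Fin M)) (f : (Fin (M + 1) → F) → F) :
    (Fin (M + 1) → F) → F :=
  L.foldr (ddbar β) f

/-- `L = [i_1, …, i_ℓ]` is a reduced word for `v`, i.e. `v = s_{i_1} ⋯ s_{i_ℓ}`
with `ℓ = ℓ(v)`. -/
def IsReducedWord {M : ℕ} (L : List (Fin M)) (v : Equiv.Perm (Fin (M + 1))) : Prop :=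
  (L.map fun i => Equiv.swap (Fin.castSucc i) (Fin.succ i)).prod = v ∧ L.length = permLength v

local notation "sw(" i ")" => Equiv.swap (Fin.castSucc i) (Fin.succ i)

lemma sw_lt_iff {M : ℕ} (i : Fin M) (a b : Fin (M + 1))
    (h1 : ¬ (a = i.castSucc ∧ b = i.succ)) (h2 : ¬ (a = i.succ ∧ b = i.castSucc)) :
    sw(i) a < sw(i) b ↔ a < b := by
  simp only [Equiv.swap_apply_def]
  split_ifs <;> simp only [Fin.ext_iff, Fin.lt_def, Fin.val_castSucc, Fin.val_succ] at * <;> omega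

/-- inversions indexed by values -/
def vinv {N : ℕ} (w : Equiv.Perm (Fin N)) : Finset (Fin N × Fin N) :=
  Finset.univ.filter fun p => p.1 < p.2 ∧ w⁻¹ p.2 < w⁻¹ p.1

lemma card_vinv {N : ℕ} (w : Equiv.Perm (Fin N)) : (vinv w).card = permLength w := by
  unfold vinv permLength
  refine Finset.card_bij' (fun p _ => (w⁻¹ p.2, w⁻¹ p.1)) (fun p _ => (w p.2, w p.1)) ?_ ?_ ?_ ?_
  · intro p; simp; tauto
  · intro p; simp; tauto
  · intro p; simp
  · intro p; simp

lemma vinv_sw {M : ℕ} (w : Equiv.Perm (Fin (M + 1))) (i : Fin M)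
    (h : w i.succ < w i.castSucc) :
    (w i.succ, w i.castSucc) ∉ vinv (w * sw(i)) ∧
    vinv w = insert (w i.succ, w i.castSucc) (vinv (w * sw(i))) := by
  have hlt : i.castSucc < i.succ := Fin.castSucc_lt_succ
  constructor
  · simp [vinv, hlt.le]
  · ext ⟨a, b⟩
    obtain ⟨a, rfl⟩ := w.surjective a
    obtain ⟨b, rfl⟩ := w.surjective b
    simp only [vinv, Finset.mem_filter, Finset.mem_univ, true_and, Finset.mem_insert, Prod.mk.injEq,
      EmbeddingLike.apply_eq_iff_eq, mul_inv_rev, Equiv.Perm.mul_apply, Equiv.Perm.coe_inv, Equiv.symm_apply_apply,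
      Equiv.swap_inv]
    by_cases h1 : a = i.succ ∧ b = i.castSucc
    · obtain ⟨rfl, rfl⟩ := h1
      simp [h, hlt]
    · by_cases h2 : a = i.castSucc ∧ b = i.succ
      · obtain ⟨rfl, rfl⟩ := h2
        simp [h.le, hlt.not_gt, hlt.ne]
      · rw [sw_lt_iff i b a (by tauto) (by tauto)]
        tauto

lemma len_desc {M : ℕ} (w : Equiv.Perm (Fin (M + 1))) (i : Fin M)
    (h : w i.succ < w i.castSucc) : permLength (w * sw(i)) + 1 = permLength w := by
  obtain ⟨h1, h2⟩ := vinv_sw w i h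
  rw [← card_vinv w, h2, Finset.card_insert_of_notMem h1, card_vinv]

lemma len_asc {M : ℕ} (w : Equiv.Perm (Fin (M + 1))) (i : Fin M)
    (h : w i.castSucc < w i.succ) : permLength w + 1 = permLength (w * sw(i)) := by
  have := len_desc (w * sw(i)) i (by simpa using h)
  rwa [mul_assoc, Equiv.swap_mul_self, mul_one] at this

lemma asc_or_desc {M : ℕ} (w : Equiv.Perm (Fin (M + 1))) (i : Fin M) :
    w i.castSucc < w i.succ ∨ w i.succ < w i.castSucc := by
  apply lt_or_gt_of_ne
  intro h
  have := w.injective h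
  exact absurd this (Fin.castSucc_lt_succ).ne

lemma permLength_one {N : ℕ} : permLength (1 : Equiv.Perm (Fin N)) = 0 := by
  simp only [permLength, Finset.card_eq_zero, Finset.filter_eq_empty_iff]
  intro p _ h
  exact absurd h.1 (not_lt.2 h.2.le)

lemma eq_omega {M : ℕ} (w : Equiv.Perm (Fin (M + 1)))
    (h : ∀ i : Fin M, w i.succ < w i.castSucc) : w = omegaPerm (M + 1) := by
  have hs : StrictAnti w := Fin.strictAnti_iff_succ_lt.2 h
  have h2 : StrictMono (fun j => Fin.rev (w j)) := fun a b hab => Fin.rev_lt_rev.2 (hs hab)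
  have h3 : (fun j => Fin.rev (w j)) = id := by
    refine (StrictMono.range_inj h2 strictMono_id).1 ?_
    rw [Set.range_id, Set.range_eq_univ]
    exact Fin.rev_surjective.comp w.surjective
  ext j
  have := congrFun h3 j
  simp only [id] at this
  have h4 : w j = Fin.rev j := by rw [← this, Fin.rev_rev, this]
  rw [h4]; rfl

lemma down_induction {M : ℕ} {P : Equiv.Perm (Fin (M + 1)) → Prop}
    (h0 : P (omegaPerm (M + 1)))
    (hs : ∀ w (i : Fin M), w i.succ < w i.castSucc → P w → P (w * sw(i))) : ∀ w, P w := by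
  have hb : ∀ w : Equiv.Perm (Fin (M + 1)), permLength w ≤ (M + 1) * (M + 1) := by
    intro w
    refine (Finset.card_le_univ _).trans ?_
    simp
  have key : ∀ k, ∀ w : Equiv.Perm (Fin (M + 1)), (M + 1) * (M + 1) - permLength w = k → P w := by
    intro k
    induction k using Nat.strong_induction_on with
    | _ k ih =>
      intro w hk
      by_cases hw : ∀ i : Fin M, w i.succ < w i.castSucc
      · rw [eq_omega w hw]; exact h0
      · push Not at hw
        obtain ⟨i, hi⟩ := hw
        have hi' : w i.castSucc < w i.succ := (asc_or_desc w i).resolve_right (not_lt.2 hi)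
        have hl := len_asc w i hi'
        have hb' := hb (w * sw(i))
        have := ih _ (by omega) (w * sw(i)) rfl
        have := hs (w * sw(i)) i (by simpa using hi') this
        rwa [mul_assoc, Equiv.swap_mul_self, mul_one] at this
  intro w
  exact key _ w rfl

lemma len_word {M : ℕ} (L : List (Fin M)) :
    permLength ((L.map fun i => sw(i)).prod) ≤ L.length := by
  induction L using List.reverseRecOn with
  | nil => simp [permLength_one]
  | append_singleton L i ih =>
    simp only [List.map_append, List.prod_append, List.map_cons, List.map_nil, List.prod_singleton,
      List.length_append, List.length_singleton]
    rcases asc_or_desc ((L.map fun i => sw(i)).prod) i with h | h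
    · have := len_asc _ i h; omega
    · have := len_desc _ i h; omega

lemma exists_of_ne_omega {M : ℕ} (u : Equiv.Perm (Fin (M + 1))) (hu : u ≠ omegaPerm (M + 1)) :
    ∃ i : Fin (M + 1), (i : ℕ) + (u i : ℕ) + 2 ≤ M + 1 := by
  by_contra hcon
  push Not at hcon
  apply hu
  have hle : ∀ j ∈ Finset.univ, ((omegaPerm (M + 1)) j : ℕ) ≤ (u j : ℕ) := by
    intro j _
    have := hcon j
    change ((Fin.rev j : Fin (M + 1)) : ℕ) ≤ _
    rw [Fin.val_rev]
    omega
  have hsum : ∑ j, ((omegaPerm (M + 1)) j : ℕ) = ∑ j, (u j : ℕ) := by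
    rw [Equiv.sum_comp u (fun j => (j : ℕ)),
      Equiv.sum_comp (omegaPerm (M + 1)) (fun j => (j : ℕ))]
  have := (Finset.sum_eq_sum_iff_of_le hle).1 hsum
  ext j
  exact (this j (Finset.mem_univ _)).symm

lemma negOm_factor [Field F] (β a b : F) (hb : 1 + β * b ≠ 0) :
    a + negOm β b + β * a * negOm β b = (a - b) / (1 + β * b) := by
  have h : negOm β b * (1 + β * b) = -b := div_mul_cancel₀ _ hb
  rw [eq_div_iff hb]
  linear_combination (1 + β * a) * h

lemma groth_vanish [Field F] {M : ℕ} {β : F}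
    {G : Equiv.Perm (Fin (M + 1)) → (Fin (M + 1) → F) → (Fin (M + 1) → F) → F}
    (hG : IsGroth M β G) (z : Fin (M + 1) → F) (hz : Function.Injective z)
    (hb : ∀ j, 1 + β * z j ≠ 0) :
    ∀ v u : Equiv.Perm (Fin (M + 1)), permLength u ≤ permLength v → u ≠ v →
      G v (fun j => z (u j)) (fun j => negOm β (z j)) = 0 := by
  refine down_induction ?_ ?_
  · intro u _ hu
    rw [hG.1]
    obtain ⟨i, hi⟩ := exists_of_ne_omega u hu
    refine Finset.prod_eq_zero (i := (i, u i)) (by simpa using hi) ?_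
    rw [negOm_factor _ _ _ (hb _), sub_self, zero_div]
  · intro v i hv ih u hlen hne
    have hl := len_desc v i hv
    have hx : (fun j => z (u j)) i.castSucc ≠ (fun j => z (u j)) i.succ := by
      intro h
      exact (Fin.castSucc_lt_succ (i := i)).ne (u.injective (hz h))
    rw [hG.2 v i _ _ hl hx, ih u (by omega) (by rintro rfl; omega)]
    have h2 := ih (u * sw(i)) (by
        rcases asc_or_desc u i with h | h
        · have := len_asc u i h; omega
        · have := len_desc u i h; omega)
      (by
        rintro rfl
        apply hne
        rw [mul_assoc, Equiv.swap_mul_self, mul_one])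
    simp only [Equiv.Perm.mul_apply] at h2
    rw [h2]
    simp

lemma groth_diag [Field F] {M : ℕ} {β : F}
    {G : Equiv.Perm (Fin (M + 1)) → (Fin (M + 1) → F) → (Fin (M + 1) → F) → F}
    (hG : IsGroth M β G) (z : Fin (M + 1) → F) (hz : Function.Injective z)
    (hb : ∀ j, 1 + β * z j ≠ 0) :
    ∀ v : Equiv.Perm (Fin (M + 1)),
      G v (fun j => z (v j)) (fun j => negOm β (z j)) =
        ∏ p ∈ vinv v, (z p.2 - z p.1) / (1 + β * z p.1) := by
  refine down_induction ?_ ?_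
  · rw [hG.1]
    refine Finset.prod_bij' (fun p _ => (p.2, Fin.rev p.1)) (fun p _ => (Fin.rev p.2, p.1))
      ?_ ?_ ?_ ?_ ?_
    · rintro ⟨a, b⟩ h
      simp only [Finset.mem_filter, Finset.mem_univ, true_and] at h
      have hr : (omegaPerm (M + 1))⁻¹ = omegaPerm (M + 1) := rfl
      simp only [vinv, Finset.mem_filter, Finset.mem_univ, true_and, hr]
      change b < Fin.rev a ∧ Fin.rev (Fin.rev a) < Fin.rev b
      simp only [Fin.lt_def, Fin.val_rev]
      omega
    · rintro ⟨a, b⟩ h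
      simp only [vinv, Finset.mem_filter, Finset.mem_univ, true_and] at h
      simp only [Finset.mem_filter, Finset.mem_univ, true_and, Fin.val_rev]
      have := h.1
      simp only [Fin.lt_def] at this
      omega
    · rintro ⟨a, b⟩ h; simp
    · rintro ⟨a, b⟩ h; simp
    · rintro ⟨a, b⟩ h
      rw [negOm_factor _ _ _ (hb _)]
      rfl
  · intro v i hv ih
    have hl := len_desc v i hv
    have hzne : z (v i.castSucc) - z (v i.succ) ≠ 0 := by
      rw [sub_ne_zero]
      intro h
      exact hv.ne' (hz h)
    have hzne2 : z (v i.succ) ≠ z (v i.castSucc) := fun h => hv.ne (hz h)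
    rw [hG.2 v i _ _ hl (by simpa using hzne2),
      groth_vanish hG z hz hb v (v * sw(i)) (by omega) (by intro h; rw [h] at hl; omega)]
    obtain ⟨h1, h2⟩ := vinv_sw v i hv
    rw [h2, Finset.prod_insert h1] at ih
    simp only [Equiv.Perm.mul_apply, Equiv.swap_apply_self, Equiv.swap_apply_left,
      Equiv.swap_apply_right]
    rw [ih]
    have := hb (v i.succ)
    have hzne' : z (v i.succ) - z (v i.castSucc) ≠ 0 := by
      rwa [← neg_sub, neg_ne_zero]
    simp only at *
    field_simp
    ring

lemma groth_inj [Field F] {M : ℕ} {β : F}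
    {G : Equiv.Perm (Fin (M + 1)) → (Fin (M + 1) → F) → (Fin (M + 1) → F) → F}
    (hG : IsGroth M β G) (z : Fin (M + 1) → F) (hz : Function.Injective z)
    (hb : ∀ j, 1 + β * z j ≠ 0) (c : Equiv.Perm (Fin (M + 1)) → F)
    (hc : ∀ u : Equiv.Perm (Fin (M + 1)),
      ∑ v, G v (fun j => z (u j)) (fun j => negOm β (z j)) * c v = 0) : c = 0 := by
  have key : ∀ k, ∀ v, permLength v = k → c v = 0 := by
    intro k
    induction k using Nat.strong_induction_on with
    | _ k ih =>
      intro v hv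
      have h := hc v
      rw [Finset.sum_eq_single v] at h
      · rcases mul_eq_zero.1 h with h | h
        · exfalso
          rw [groth_diag hG z hz hb, Finset.prod_eq_zero_iff] at h
          obtain ⟨p, hp, h⟩ := h
          simp only [vinv, Finset.mem_filter] at hp
          rw [div_eq_zero_iff, sub_eq_zero] at h
          rcases h with h | h
          · exact hp.2.1.ne' (hz h)
          · exact hb _ h
        · exact h
      · intro w _ hw
        rcases lt_or_ge (permLength w) (permLength v) with hlt | hge
        · rw [ih _ (hv ▸ hlt) w rfl, mul_zero]
        · rw [groth_vanish hG z hz hb w v hge hw.symm, zero_mul]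
      · simp
  funext v
  exact key _ v rfl

lemma groth_surj [Field F] {M : ℕ} {β : F}
    {G : Equiv.Perm (Fin (M + 1)) → (Fin (M + 1) → F) → (Fin (M + 1) → F) → F}
    (hG : IsGroth M β G) (z : Fin (M + 1) → F) (hz : Function.Injective z)
    (hb : ∀ j, 1 + β * z j ≠ 0) (f : Equiv.Perm (Fin (M + 1)) → F) :
    ∃ c : Equiv.Perm (Fin (M + 1)) → F, ∀ u : Equiv.Perm (Fin (M + 1)),
      ∑ v, G v (fun j => z (u j)) (fun j => negOm β (z j)) * c v = f u := by
  let A : Matrix (Equiv.Perm (Fin (M + 1))) (Equiv.Perm (Fin (M + 1))) F :=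
    Matrix.of fun u v => G v (fun j => z (u j)) (fun j => negOm β (z j))
  have hinj : Function.Injective (Matrix.mulVecLin A) := by
    rw [← LinearMap.ker_eq_bot, LinearMap.ker_eq_bot']
    intro c hc
    refine groth_inj hG z hz hb c fun u => ?_
    exact congrFun hc u
  obtain ⟨c, hc⟩ := (LinearMap.injective_iff_surjective.1 hinj) f
  exact ⟨c, fun u => congrFun hc u⟩

lemma groth_step [Field F] {M : ℕ} {β : F}
    {G : Equiv.Perm (Fin (M + 1)) → (Fin (M + 1) → F) → (Fin (M + 1) → F) → F}
    (hG : IsGroth M β G) (z : Fin (M + 1) → F) (hz : Function.Injective z)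
    (hb : ∀ j, 1 + β * z j ≠ 0) (i : Fin M) (f : (Fin (M + 1) → F) → F)
    (c c' : Equiv.Perm (Fin (M + 1)) → F)
    (hc : ∀ u : Equiv.Perm (Fin (M + 1)),
      ∑ v, G v (fun j => z (u j)) (fun j => negOm β (z j)) * c v = f (fun j => z (u j)))
    (hc' : ∀ u : Equiv.Perm (Fin (M + 1)),
      ∑ v, G v (fun j => z (u j)) (fun j => negOm β (z j)) * c' v
        = ddbar β i f (fun j => z (u j))) (w : Equiv.Perm (Fin (M + 1))) :
    c' w = if w i.castSucc < w i.succ then c (w * sw(i)) else β * c w := by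
  suffices h : (fun w => c' w - if w i.castSucc < w i.succ then c (w * sw(i)) else β * c w) = 0 by
    exact sub_eq_zero.1 (congrFun h w)
  refine groth_inj hG z hz hb _ fun u => ?_
  simp only [mul_sub, Finset.sum_sub_distrib]
  rw [hc' u, sub_eq_zero]
  set y := (fun j => negOm β (z j)) with hy
  have hx : z (u i.castSucc) ≠ z (u i.succ) := by
    intro h
    exact (Fin.castSucc_lt_succ (i := i)).ne (u.injective (hz h))
  have hd : z (u i.castSucc) - z (u i.succ) ≠ 0 := sub_ne_zero.2 hx
  have hcu := hc u
  have hcs := hc (u * sw(i))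
  simp only [Equiv.Perm.mul_apply] at hcs
  have lhs : ddbar β i f (fun j => z (u j)) = ∑ v,
      (((1 + β * z (u i.succ)) * G v (fun j => z (u j)) y -
        (1 + β * z (u i.castSucc)) * G v (fun j => z (u (sw(i) j))) y) /
          (z (u i.castSucc) - z (u i.succ)) + β * G v (fun j => z (u j)) y) * c v := by
    unfold ddbar
    rw [← hcu, ← hcs, Finset.mul_sum, Finset.mul_sum, ← Finset.sum_sub_distrib, Finset.sum_div,
      Finset.mul_sum, ← Finset.sum_add_distrib]
    refine Finset.sum_congr rfl fun v _ => ?_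
    ring
  rw [lhs]
  have rhs : ∑ v, G v (fun j => z (u j)) y *
      (if v i.castSucc < v i.succ then c (v * sw(i)) else β * c v) =
      ∑ v, (if v i.castSucc < v i.succ then 0 else
        (G (v * sw(i)) (fun j => z (u j)) y + β * G v (fun j => z (u j)) y) * c v) := by
    have h1 : ∀ v : Equiv.Perm (Fin (M + 1)), G v (fun j => z (u j)) y *
      (if v i.castSucc < v i.succ then c (v * sw(i)) else β * c v) =
      (if v i.castSucc < v i.succ then G v (fun j => z (u j)) y * c (v * sw(i)) else 0) +
      (if v i.castSucc < v i.succ then 0 else G v (fun j => z (u j)) y * (β * c v)) := by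
      intro v
      split_ifs <;> simp
    simp only [h1]
    rw [Finset.sum_add_distrib, ← Equiv.sum_comp (Equiv.mulRight sw(i)), ← Finset.sum_add_distrib]
    refine Finset.sum_congr rfl fun v _ => ?_
    simp only [Equiv.coe_mulRight, Equiv.Perm.mul_apply, Equiv.swap_apply_left,
      Equiv.swap_apply_right, mul_assoc, Equiv.swap_mul_self, mul_one]
    rcases asc_or_desc v i with h | h
    · simp [h, h.le]
    · rw [if_pos h, if_neg (not_lt.2 h.le), if_neg (not_lt.2 h.le)]
      ring
  rw [rhs]
  refine Finset.sum_congr rfl fun v _ => ?_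
  rcases asc_or_desc v i with h | h
  · rw [if_pos h]
    have hl := len_asc v i h
    have e : v = (v * sw(i)) * sw(i) := by rw [mul_assoc, Equiv.swap_mul_self, mul_one]
    have g1 := hG.2 (v * sw(i)) i (fun j => z (u j)) y (by rw [← e]; exact hl) hx
    have g2 := hG.2 (v * sw(i)) i (fun j => z (u (sw(i) j))) y (by rw [← e]; exact hl)
      (by simpa using hx.symm)
    rw [← e] at g1 g2
    simp only [Equiv.swap_apply_self, Equiv.swap_apply_left, Equiv.swap_apply_right] at g1 g2
    rw [g1, g2]
    have hd' : z (u i.succ) - z (u i.castSucc) ≠ 0 := sub_ne_zero.2 hx.symm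
    have : z (u i.succ) - z (u i.castSucc) = - (z (u i.castSucc) - z (u i.succ)) := by ring
    rw [this]
    refine mul_eq_zero_of_left ?_ _
    field_simp
    ring
  · rw [if_neg (not_lt.2 h.le), hG.2 v i _ y (len_desc v i h) hx]

lemma groth_word [Field F] {M : ℕ} {β : F}
    {G : Equiv.Perm (Fin (M + 1)) → (Fin (M + 1) → F) → (Fin (M + 1) → F) → F}
    (hG : IsGroth M β G) (z : Fin (M + 1) → F) (hz : Function.Injective z)
    (hb : ∀ j, 1 + β * z j ≠ 0) (L : List (Fin M)) :
    ∀ (v : Equiv.Perm (Fin (M + 1))) (_ : IsReducedWord L v) (f : (Fin (M + 1) → F) → F)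
    (c : Equiv.Perm (Fin (M + 1)) → F)
    (_ : ∀ u : Equiv.Perm (Fin (M + 1)),
      ∑ v, G v (fun j => z (u j)) (fun j => negOm β (z j)) * c v = f (fun j => z (u j))),
    ddbarWord β L f z = c v := by
  induction L using List.reverseRecOn with
  | nil =>
    intro v hv f c hc
    have hv1 : v = 1 := by simpa using hv.1.symm
    subst hv1
    have h := hc 1
    rw [Finset.sum_eq_single 1, groth_diag hG z hz hb] at h
    · have he : vinv (1 : Equiv.Perm (Fin (M + 1))) = ∅ := by
        rw [← Finset.card_eq_zero, card_vinv, permLength_one]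
      rw [he] at h
      simpa [ddbarWord] using h.symm
    · intro w _ hw
      rw [groth_vanish hG z hz hb w 1 (by simp [permLength_one]) hw.symm, zero_mul]
    · simp
  | append_singleton L i ih =>
    intro v hv f c hc
    obtain ⟨c', hc'⟩ := groth_surj hG z hz hb (fun u => ddbar β i f (fun j => z (u j)))
    obtain ⟨h1, h2⟩ := hv
    simp only [List.map_append, List.prod_append, List.map_cons, List.map_nil, List.prod_singleton,
      List.length_append, List.length_singleton] at h1 h2
    have hlw := len_word L
    set w := (L.map fun i => sw(i)).prod with hw
    have hasc : w i.castSucc < w i.succ := by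
      rcases asc_or_desc w i with h | h
      · exact h
      · have := len_desc w i h
        rw [h1] at this
        omega
    have hl := len_asc w i hasc
    rw [h1] at hl
    have := ih w ⟨rfl, by omega⟩ (ddbar β i f) c' hc'
    rw [groth_step hG z hz hb i f c c' hc hc', if_pos hasc, h1] at this
    rw [← this]
    simp [ddbarWord]

/-- the degree bounds defining the span of the staircase monomials -/
def InStair [Field F] {M : ℕ} (P : MvPolynomial (Fin (M + 1)) F) : Prop :=
  ∀ j : Fin (M + 1), P.degreeOf j + (j : ℕ) ≤ M

lemma stair_zero_aux [Field F] {M : ℕ} (P : MvPolynomial (Fin (M + 1)) F) (hP : InStair P)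
    (z : Fin (M + 1) → F) (hz : Function.Injective z)
    (h : ∀ u : Equiv.Perm (Fin (M + 1)), MvPolynomial.eval (fun j => z (u j)) P = 0) :
    ∀ m k : ℕ, k + m = M + 1 → ∀ (u : Equiv.Perm (Fin (M + 1))) (p : Fin (M + 1) → F),
      (∀ j : Fin (M + 1), (j : ℕ) < k → p j = z (u j)) → MvPolynomial.eval p P = 0 := by
  intro m
  induction m with
  | zero =>
    intro k hk u p hp
    have : p = fun j => z (u j) := funext fun j => hp j (by omega)
    rw [this]
    exact h u
  | succ m ih =>
    intro k hk u p hp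
    let κ : Fin (M + 1) := ⟨k, by omega⟩
    let q : Polynomial F := MvPolynomial.aeval
      (fun j => if j = κ then (Polynomial.X : Polynomial F) else Polynomial.C (p j)) P
    have hq : ∀ s, q.eval s = MvPolynomial.eval (Function.update p κ s) P := by
      intro s
      simp only [q]
      rw [← Polynomial.coe_evalRingHom, MvPolynomial.aeval_def, MvPolynomial.hom_eval₂]
      rw [MvPolynomial.eval, MvPolynomial.coe_eval₂Hom]
      congr 1
      · ext; simp
      · funext j
        by_cases hj : j = κ
        · subst hj; simp
        · simp [hj]
    have hdeg : q.natDegree ≤ P.degreeOf κ := by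
      simp only [q]
      rw [MvPolynomial.aeval_def, MvPolynomial.eval₂_eq']
      refine Polynomial.natDegree_sum_le_of_forall_le _ _ fun d hd => ?_
      refine Polynomial.natDegree_mul_le.trans ?_
      rw [Polynomial.algebraMap_eq, Polynomial.natDegree_C, zero_add]
      refine (Polynomial.natDegree_prod_le _ _).trans ?_
      rw [Finset.sum_eq_single_of_mem κ (Finset.mem_univ _)]
      · simpa using MvPolynomial.monomial_le_degreeOf κ hd
      · intro j _ hj
        rw [if_neg hj, ← Polynomial.C_pow, Polynomial.natDegree_C]
    have hq0 : q = 0 := by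
      classical
      refine Polynomial.eq_zero_of_natDegree_lt_card_of_eval_eq_zero' q
        ((Finset.univ.filter fun j : Fin (M + 1) => κ ≤ j).image fun j => z (u j)) ?_ ?_
      · intro s hs
        simp only [Finset.mem_image, Finset.mem_filter, Finset.mem_univ, true_and] at hs
        obtain ⟨j, hj, rfl⟩ := hs
        rw [hq]
        refine ih (k + 1) (by omega) (u * Equiv.swap κ j) _ fun l hl => ?_
        by_cases hlk : l = κ
        · subst hlk; simp
        · have hlk' : (l : ℕ) < k := by
            have : (l : ℕ) ≠ k := fun h => hlk (Fin.ext h)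
            omega
          have hlj : l ≠ j := by
            rintro rfl
            have : k ≤ (l : ℕ) := hj
            omega
          rw [Function.update_of_ne hlk, hp l hlk', Equiv.Perm.mul_apply,
            Equiv.swap_apply_of_ne_of_ne hlk hlj]
      · rw [Finset.card_image_of_injective (f := fun j => z (u j)) _ (hz.comp u.injective)]
        have : (Finset.univ.filter fun j : Fin (M + 1) => κ ≤ j) = Finset.Ici κ := by
          ext; simp
        rw [this, Fin.card_Ici]
        have := hP κ
        simp only [κ] at *
        omega
    have := hq (p κ)
    rw [Function.update_eq_self, hq0] at this
    simpa using this.symm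

lemma stair_zero [Field F] {M : ℕ} (P : MvPolynomial (Fin (M + 1)) F) (hP : InStair P)
    (z : Fin (M + 1) → F) (hz : Function.Injective z)
    (h : ∀ u : Equiv.Perm (Fin (M + 1)), MvPolynomial.eval (fun j => z (u j)) P = 0)
    (p : Fin (M + 1) → F) : MvPolynomial.eval p P = 0 :=
  stair_zero_aux P hP z hz h (M + 1) 0 (by omega) 1 p (by simp)

lemma sub_rename_dvd [Field F] {M : ℕ} (i : Fin M) (P : MvPolynomial (Fin (M + 1)) F) :
    (MvPolynomial.X i.castSucc - MvPolynomial.X i.succ : MvPolynomial (Fin (M + 1)) F) ∣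
      P - MvPolynomial.rename sw(i) P := by
  set I : Ideal (MvPolynomial (Fin (M + 1)) F) :=
    Ideal.span {MvPolynomial.X i.castSucc - MvPolynomial.X i.succ} with hI
  have hmem : (MvPolynomial.X i.castSucc - MvPolynomial.X i.succ : MvPolynomial (Fin (M + 1)) F) ∈ I :=
    Ideal.subset_span rfl
  have key : (Ideal.Quotient.mkₐ F I) =
      (Ideal.Quotient.mkₐ F I).comp (MvPolynomial.rename sw(i)) := by
    refine MvPolynomial.algHom_ext fun j => ?_
    simp only [AlgHom.comp_apply, MvPolynomial.rename_X, Ideal.Quotient.mkₐ_eq_mk]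
    rw [Ideal.Quotient.eq]
    by_cases h1 : j = i.castSucc
    · subst h1
      simpa using hmem
    · by_cases h2 : j = i.succ
      · subst h2
        rw [Equiv.swap_apply_right, ← neg_sub]
        exact I.neg_mem hmem
      · rw [Equiv.swap_apply_of_ne_of_ne h1 h2, sub_self]
        exact I.zero_mem
  rw [← Ideal.mem_span_singleton, ← Ideal.Quotient.eq]
  exact DFunLike.congr_fun key P

lemma stair_dd [Field F] {M : ℕ} (β : F) (i : Fin M) (P : MvPolynomial (Fin (M + 1)) F)
    (hP : InStair P) : ∃ Q : MvPolynomial (Fin (M + 1)) F, InStair Q ∧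
      (MvPolynomial.X i.castSucc - MvPolynomial.X i.succ) * Q =
        (1 + MvPolynomial.C β * MvPolynomial.X i.succ) * P -
          (1 + MvPolynomial.C β * MvPolynomial.X i.castSucc) * MvPolynomial.rename sw(i) P := by
  obtain ⟨R, hR⟩ := sub_rename_dvd i P
  have hne : i.castSucc ≠ i.succ := (Fin.castSucc_lt_succ (i := i)).ne
  let Q := (1 + MvPolynomial.C β * MvPolynomial.X i.succ) * R -
      MvPolynomial.C β * MvPolynomial.rename sw(i) P
  have hQ : (MvPolynomial.X i.castSucc - MvPolynomial.X i.succ) * Q =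
        (1 + MvPolynomial.C β * MvPolynomial.X i.succ) * P -
          (1 + MvPolynomial.C β * MvPolynomial.X i.castSucc) * MvPolynomial.rename sw(i) P := by
    simp only [Q]
    linear_combination (-(1 + MvPolynomial.C β * MvPolynomial.X i.succ)) * hR
  refine ⟨Q, ?_, hQ⟩
  intro j
  by_cases hQ0 : Q = 0
  · rw [hQ0, MvPolynomial.degreeOf_zero]; omega
  set D : MvPolynomial (Fin (M + 1)) F := MvPolynomial.X i.castSucc - MvPolynomial.X i.succ with hD
  have hDr : ∀ e : Fin (M + 1), (e = i.castSucc ∨ e = i.succ) → D ≠ 0 ∧ 1 ≤ D.degreeOf e := by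
    intro e he
    have hc : MvPolynomial.coeff (Finsupp.single e 1) D ≠ 0 := by
      rw [hD, MvPolynomial.coeff_sub, MvPolynomial.coeff_X, MvPolynomial.coeff_X]
      rcases he with rfl | rfl
      · simp [Finsupp.single_left_inj, hne.symm]
      · simp [Finsupp.single_left_inj, hne]
    refine ⟨?_, ?_⟩
    · intro h0
      rw [h0] at hc
      simp at hc
    · simpa using MvPolynomial.monomial_le_degreeOf e (MvPolynomial.mem_support_iff.2 hc)
  have hD0 := (hDr _ (Or.inl rfl)).1
  have hdeg := MvPolynomial.degreeOf_mul_eq (n := j) hD0 hQ0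
  rw [hQ] at hdeg
  have hlin : ∀ e : Fin (M + 1), (1 + MvPolynomial.C β * MvPolynomial.X e :
      MvPolynomial (Fin (M + 1)) F).degreeOf j ≤ if j = e then 1 else 0 := by
    intro e
    refine (MvPolynomial.degreeOf_add_le _ _ _).trans ?_
    rw [← MvPolynomial.C_1, MvPolynomial.degreeOf_C]
    refine max_le (Nat.zero_le _) ((MvPolynomial.degreeOf_C_mul_le _ _ _).trans ?_)
    rw [MvPolynomial.degreeOf_X]
  have hren : (MvPolynomial.rename sw(i) P).degreeOf j = P.degreeOf (sw(i) j) := by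
    have := MvPolynomial.degreeOf_rename_of_injective (p := P) (Equiv.injective sw(i)) (sw(i) j)
    rwa [Equiv.swap_apply_self] at this
  have hup : ((1 + MvPolynomial.C β * MvPolynomial.X i.succ) * P -
          (1 + MvPolynomial.C β * MvPolynomial.X i.castSucc) * MvPolynomial.rename sw(i) P).degreeOf j
      ≤ max ((if j = i.succ then 1 else 0) + P.degreeOf j)
        ((if j = i.castSucc then 1 else 0) + P.degreeOf (sw(i) j)) := by
    refine (MvPolynomial.degreeOf_sub_le _ _ _).trans (max_le_max ?_ ?_)
    · exact (MvPolynomial.degreeOf_mul_le _ _ _).trans (Nat.add_le_add_right (hlin _) _)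
    · refine (MvPolynomial.degreeOf_mul_le _ _ _).trans ?_
      rw [hren]
      exact Nat.add_le_add_right (hlin _) _
  rw [hdeg] at hup
  have hj := hP j
  by_cases h1 : j = i.castSucc
  · have hD1 := (hDr j (Or.inl h1)).2
    subst h1
    have h2 := hP i.succ
    rw [Equiv.swap_apply_left, if_neg hne, if_pos rfl] at hup
    simp only [Fin.val_castSucc, Fin.val_succ] at *
    omega
  · by_cases h2 : j = i.succ
    · have hD1 := (hDr j (Or.inr h2)).2
      subst h2
      have h2 := hP i.castSucc
      rw [Equiv.swap_apply_right, if_neg hne.symm, if_pos rfl] at hup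
      simp only [Fin.val_castSucc, Fin.val_succ] at *
      omega
    · rw [Equiv.swap_apply_of_ne_of_ne h1 h2, if_neg h1, if_neg h2] at hup
      omega

lemma groth_poly [Field F] {M : ℕ} {β : F}
    {G : Equiv.Perm (Fin (M + 1)) → (Fin (M + 1) → F) → (Fin (M + 1) → F) → F}
    (hG : IsGroth M β G) (y : Fin (M + 1) → F) :
    ∀ v : Equiv.Perm (Fin (M + 1)), ∃ P : MvPolynomial (Fin (M + 1)) F, InStair P ∧
      ∀ x : Fin (M + 1) → F, Function.Injective x → G v x y = MvPolynomial.eval x P := by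
  refine down_induction ?_ ?_
  · refine ⟨∏ p ∈ Finset.univ.filter
            (fun p : Fin (M + 1) × Fin (M + 1) => (p.1 : ℕ) + (p.2 : ℕ) + 2 ≤ M + 1),
          (MvPolynomial.X p.1 + MvPolynomial.C (y p.2) +
            MvPolynomial.C (β * y p.2) * MvPolynomial.X p.1), ?_, ?_⟩
    · intro j
      have h1 : ∀ p : Fin (M + 1) × Fin (M + 1), (MvPolynomial.X p.1 + MvPolynomial.C (y p.2) +
            MvPolynomial.C (β * y p.2) * MvPolynomial.X p.1 :
              MvPolynomial (Fin (M + 1)) F).degreeOf j ≤ if j = p.1 then 1 else 0 := by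
        intro p
        refine (MvPolynomial.degreeOf_add_le _ _ _).trans (max_le
          ((MvPolynomial.degreeOf_add_le _ _ _).trans (max_le ?_ ?_))
          ((MvPolynomial.degreeOf_C_mul_le _ _ _).trans ?_))
        · rw [MvPolynomial.degreeOf_X]
        · rw [MvPolynomial.degreeOf_C]; exact Nat.zero_le _
        · rw [MvPolynomial.degreeOf_X]
      have h2 := (MvPolynomial.degreeOf_prod_le j (Finset.univ.filter
            (fun p : Fin (M + 1) × Fin (M + 1) => (p.1 : ℕ) + (p.2 : ℕ) + 2 ≤ M + 1))
            (fun p => (MvPolynomial.X p.1 + MvPolynomial.C (y p.2) +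
            MvPolynomial.C (β * y p.2) * MvPolynomial.X p.1 :
              MvPolynomial (Fin (M + 1)) F))).trans (Finset.sum_le_sum fun p _ => h1 p)
      rw [← Finset.card_filter] at h2
      have h3 : (Finset.filter (fun p : Fin (M + 1) × Fin (M + 1) => j = p.1) (Finset.univ.filter
            (fun p : Fin (M + 1) × Fin (M + 1) => (p.1 : ℕ) + (p.2 : ℕ) + 2 ≤ M + 1))).card
            ≤ (Finset.range (M - j)).card := by
        refine Finset.card_le_card_of_injOn (fun p => (p.2 : ℕ)) ?_ ?_
        · rintro ⟨a, b⟩ h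
          simp at h
          obtain ⟨h, rfl⟩ := h
          simp
          omega
        · rintro ⟨a, b⟩ h ⟨a', b'⟩ h' hh
          simp at h h' hh
          obtain ⟨h, rfl⟩ := h
          obtain ⟨h', rfl⟩ := h'
          simp
          exact Fin.ext hh
      rw [Finset.card_range] at h3
      have := j.isLt
      omega
    · intro x _
      rw [hG.1, map_prod]
      refine Finset.prod_congr rfl fun p _ => ?_
      simp
      ring
  · rintro w i hw ⟨P, hP, hPe⟩
    obtain ⟨Q, hQ, hQe⟩ := stair_dd β i P hP
    refine ⟨Q, hQ, fun x hx => ?_⟩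
    have hne : x i.castSucc ≠ x i.succ := fun h => (Fin.castSucc_lt_succ (i := i)).ne (hx h)
    rw [hG.2 w i x y (len_desc w i hw) hne, hPe x hx,
      hPe (fun j => x (sw(i) j)) (hx.comp (Equiv.injective _)), div_eq_iff (sub_ne_zero.2 hne)]
    have := congrArg (MvPolynomial.eval x) hQe
    simp only [map_mul, map_sub, map_add, map_one, MvPolynomial.eval_X, MvPolynomial.eval_C,
      MvPolynomial.eval_rename] at this
    rw [mul_comm (MvPolynomial.eval x Q), this]
    rfl

lemma interp_core [Field F] (M : ℕ) (β : F)
    (x z : Fin (M + 1) → F) (hx : Function.Injective x) (hz : Function.Injective z)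
    (hb : ∀ j, 1 + β * z j ≠ 0)
    (c : ((j : Fin (M + 1)) → Fin (M + 1 - (j : ℕ))) → F)
    (G : Equiv.Perm (Fin (M + 1)) → (Fin (M + 1) → F) → (Fin (M + 1) → F) → F)
    (hG : IsGroth M β G)
    (L : Equiv.Perm (Fin (M + 1)) → List (Fin M))
    (hL : ∀ v, IsReducedWord (L v) v) :
    (∑ d : (j : Fin (M + 1)) → Fin (M + 1 - (j : ℕ)),
        c d * ∏ j : Fin (M + 1), x j ^ ((d j : ℕ))) =
      ∑ v : Equiv.Perm (Fin (M + 1)),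
        G v x (fun j => negOm β (z j)) *
          ddbarWord β (L v)
            (fun z' => ∑ d : (j : Fin (M + 1)) → Fin (M + 1 - (j : ℕ)),
              c d * ∏ j : Fin (M + 1), z' j ^ ((d j : ℕ))) z := by
  set f : (Fin (M + 1) → F) → F :=
    (fun z' => ∑ d : (j : Fin (M + 1)) → Fin (M + 1 - (j : ℕ)),
              c d * ∏ j : Fin (M + 1), z' j ^ ((d j : ℕ))) with hf
  change f x = _
  obtain ⟨e, he⟩ := groth_surj hG z hz hb (fun u => f (fun j => z (u j)))
  have hw : ∀ v, ddbarWord β (L v) f z = e v := fun v =>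
    groth_word hG z hz hb (L v) v (hL v) f e he
  simp only [hw]
  choose P hP hPe using groth_poly hG (fun j => negOm β (z j))
  let Q : MvPolynomial (Fin (M + 1)) F := ∑ d : (j : Fin (M + 1)) → Fin (M + 1 - (j : ℕ)),
    MvPolynomial.C (c d) * ∏ j : Fin (M + 1), MvPolynomial.X j ^ ((d j : ℕ))
  have hQe : ∀ p, MvPolynomial.eval p Q = f p := by
    intro p
    simp [Q, hf]
  have hQ : ∀ j : Fin (M + 1), Q.degreeOf j ≤ M - j := by
    intro j
    refine (MvPolynomial.degreeOf_sum_le _ _ _).trans (Finset.sup_le fun d _ => ?_)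
    refine (MvPolynomial.degreeOf_C_mul_le _ _ _).trans ?_
    refine (MvPolynomial.degreeOf_prod_le _ _ _).trans ?_
    rw [Finset.sum_eq_single_of_mem j (Finset.mem_univ _)]
    · rw [MvPolynomial.degreeOf_X_self_pow]
      have := (d j).isLt
      omega
    · intro k _ hk
      exact MvPolynomial.degreeOf_X_pow_of_ne _ hk.symm
  have hR : InStair (Q - ∑ v, MvPolynomial.C (e v) * P v) := by
    intro j
    have h1 : (Q - ∑ v, MvPolynomial.C (e v) * P v).degreeOf j ≤ M - j := by
      refine (MvPolynomial.degreeOf_sub_le _ _ _).trans (max_le (hQ j) ?_)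
      refine (MvPolynomial.degreeOf_sum_le _ _ _).trans (Finset.sup_le fun v _ => ?_)
      refine (MvPolynomial.degreeOf_C_mul_le _ _ _).trans ?_
      have := hP v j
      omega
    have := j.isLt
    omega
  have hev : ∀ p, Function.Injective p →
      MvPolynomial.eval p (Q - ∑ v, MvPolynomial.C (e v) * P v) =
        f p - ∑ v, G v p (fun j => negOm β (z j)) * e v := by
    intro p hp
    rw [map_sub, hQe, map_sum]
    congr 1
    refine Finset.sum_congr rfl fun v _ => ?_
    rw [map_mul, MvPolynomial.eval_C, hPe v p hp, mul_comm]
  have := stair_zero _ hR z hz (fun u => by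
    rw [hev (fun j => z (u j)) (hz.comp u.injective), he u, sub_self]) x
  rw [hev x hx] at this
  exact sub_eq_zero.1 this

/-- **Interpolation formula** (Corollary `interpolation`): with `n = M+1`, let
`L_n(t,β)` be the `ℚ(β,t)`-span of the monomials `x_1^{i_1} ⋯ x_n^{i_n}` with
`0 ≤ i_j ≤ n - j` (the coefficient field `ℚ(β,t) ⊆ F` being realised as
`IntermediateField.adjoin ℚ ({β} ∪ Set.range t)`).  For any `F(x;t,β) ∈ L_n(t,β)`,
`F(x;t,β) = ∑_{v ∈ S_n} G^β_v(x; ⊖z) · ∂̄^β_v F(z;t,β)`,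
where `∂̄^β_v` (given by any reduced word of `v`) acts on the `z`-variables. -/
theorem interpolation_formula [Field F] [CharZero F] (M : ℕ) (β : F)
    (x z t : Fin (M + 1) → F)
    (hβt : AlgebraicIndependent ℚ (Sum.elim (fun _ : Unit => β) t))
    (hxz : AlgebraicIndependent (IntermediateField.adjoin ℚ ({β} ∪ Set.range t))
      (Sum.elim x z))
    (c : ((j : Fin (M + 1)) → Fin (M + 1 - (j : ℕ))) →
      IntermediateField.adjoin ℚ ({β} ∪ Set.range t))
    (G : Equiv.Perm (Fin (M + 1)) → (Fin (M + 1) → F) → (Fin (M + 1) → F) → F)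
    (hG : IsGroth M β G)
    (L : Equiv.Perm (Fin (M + 1)) → List (Fin M))
    (hL : ∀ v, IsReducedWord (L v) v) :
    (∑ d : (j : Fin (M + 1)) → Fin (M + 1 - (j : ℕ)),
        (c d : F) * ∏ j : Fin (M + 1), x j ^ ((d j : ℕ))) =
      ∑ v : Equiv.Perm (Fin (M + 1)),
        G v x (fun j => negOm β (z j)) *
          ddbarWord β (L v)
            (fun z' => ∑ d : (j : Fin (M + 1)) → Fin (M + 1 - (j : ℕ)),
              (c d : F) * ∏ j : Fin (M + 1), z' j ^ ((d j : ℕ))) z := by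
  have hinj := hxz.injective
  refine interp_core M β x z (fun a b h => ?_) (fun a b h => ?_) (fun j h => ?_)
    (fun d => (c d : F)) G hG L hL
  · exact Sum.inl_injective (hinj (a₁ := Sum.inl a) (a₂ := Sum.inl b) h)
  · exact Sum.inr_injective (hinj (a₁ := Sum.inr a) (a₂ := Sum.inr b) h)
  · have htr := hxz.transcendental (Sum.inr j)
    apply htr
    have hβ : β ∈ IntermediateField.adjoin ℚ ({β} ∪ Set.range t) :=
      IntermediateField.subset_adjoin _ _ (by simp)
    have hβ0 : β ≠ 0 := by
      rintro rfl
      simp at h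
    have hzj : z j = algebraMap (IntermediateField.adjoin ℚ ({β} ∪ Set.range t)) F
        (-(⟨β, hβ⟩ : IntermediateField.adjoin ℚ ({β} ∪ Set.range t))⁻¹) := by
      have : z j = -β⁻¹ := by
        field_simp
        linear_combination h
      rw [this]
      rfl
    rw [Sum.elim_inr, hzj]
    exact isAlgebraic_algebraMap _
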